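/- arXiv:2406.06068 — 2 statements merged into one kernel-verified Lean document; each statement's English description precedes it below -/
import Mathlib

section
/- Fix an integer n ≥ 1 and real numbers α₁, α₂, α₃ with α₁ > 0, α₂ > α₃ > 0, and α₂² − α₃² − 2α₁ ≥ 0. Let A be the 2n×2n block-circulant complex matrix whose (i, j)-th 2×2 block equals A₁ = [[0, −1], [α₁, −α₂]] if j = i, equals A₂ = [[0, 1], [0, α₃]] if j = i − 1 (mod n), and is zero otherwise. Then every eigenvalue λ of A satisfies Re(λ) ≤ 0, and every nonzero eigenvalue λ of A satisfies Re(λ) < 0. -/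
theorem aux_stab (a b c s w : ℝ) (h₁ : 0 < a) (h₂₃ : c < b) (h₃ : 0 < c)
    (hstab : b ^ 2 - c ^ 2 - 2 * a ≥ 0) (hs : 0 ≤ s) (hne : 0 < s ^ 2 + w ^ 2) :
    (a + c * s) ^ 2 + (c * w) ^ 2
      < (s ^ 2 - w ^ 2 + b * s + a) ^ 2 + (2 * s * w + b * w) ^ 2 := by
  have e : (s ^ 2 - w ^ 2 + b * s + a) ^ 2 + (2 * s * w + b * w) ^ 2
      - ((a + c * s) ^ 2 + (c * w) ^ 2)
      = (s ^ 2 + w ^ 2) ^ 2 + 2 * b * s * (s ^ 2 + w ^ 2)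
        + (s ^ 2 + w ^ 2) * (b ^ 2 - c ^ 2 - 2 * a) + 4 * a * s ^ 2 + 2 * a * (b - c) * s := by
    ring
  have hb : 0 < b := h₃.trans h₂₃
  have hbc : 0 < b - c := sub_pos.2 h₂₃
  have t1 : 0 < (s ^ 2 + w ^ 2) ^ 2 := by positivity
  have t2 : 0 ≤ 2 * b * s * (s ^ 2 + w ^ 2) := by positivity
  have t3 : 0 ≤ (s ^ 2 + w ^ 2) * (b ^ 2 - c ^ 2 - 2 * a) := mul_nonneg hne.le hstab
  have t4 : 0 ≤ 4 * a * s ^ 2 := by positivity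
  have t5 : 0 ≤ 2 * a * (b - c) * s := by positivity
  linarith

/-- Matrix form of the sufficiency direction of Proposition 1: under the stability
condition, every eigenvalue of the block-circulant system matrix has nonpositive real
part, and every nonzero eigenvalue has negative real part. -/
theorem stmt_10 (n : ℕ) [NeZero n] (α₁ α₂ α₃ : ℝ)
    (h₁ : 0 < α₁) (h₂₃ : α₃ < α₂) (h₃ : 0 < α₃)
    (hstab : α₂ ^ 2 - α₃ ^ 2 - 2 * α₁ ≥ 0)
    (A₁ A₂ : Matrix (Fin 2) (Fin 2) ℂ)
    (hA₁ : A₁ = !![0, -1; (α₁ : ℂ), -(α₂ : ℂ)])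
    (hA₂ : A₂ = !![0, 1; 0, (α₃ : ℂ)])
    (A : Matrix (ZMod n × Fin 2) (ZMod n × Fin 2) ℂ)
    (hA : ∀ (i j : ZMod n) (a b : Fin 2),
      A (i, a) (j, b) = if j = i then A₁ a b else if j = i - 1 then A₂ a b else 0) :
    ∀ lam ∈ spectrum ℂ A, lam.re ≤ 0 ∧ (lam ≠ 0 → lam.re < 0) := by
  intro lam hlam
  suffices H : lam ≠ 0 → lam.re < 0 by
    refine ⟨?_, H⟩
    by_cases h0 : lam = 0
    · simp [h0]
    · exact (H h0).le
  intro hl0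
  by_contra hre
  push Not at hre
  rw [← Matrix.spectrum_toLin', ← Module.End.hasEigenvalue_iff_mem_spectrum] at hlam
  obtain ⟨v, hv⟩ := hlam.exists_hasEigenvector
  have hv0 := hv.2
  have hvm : A.mulVec v = lam • v := by
    have := hv.apply_eq_smul
    rwa [Matrix.toLin'_apply] at this
  obtain ⟨c, hc, hcA⟩ : ∃ c : ℂ, ‖c‖ ≤ 1 ∧ ∀ (i j : ZMod n) (a b : Fin 2),
      A (i, a) (j, b) = (if j = i then A₁ a b else 0)
        + (if j = i - 1 then c * A₂ a b else 0) := by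
    by_cases h : (1 : ZMod n) = 0
    · refine ⟨0, by simp, fun i j a b => ?_⟩
      rw [hA, h]
      by_cases hj : j = i <;> simp [hj]
    · refine ⟨1, by simp, fun i j a b => ?_⟩
      rw [hA]
      by_cases hj : j = i
      · subst hj
        have h' : j ≠ j - 1 := fun e => h (by linear_combination e)
        simp [h']
      · simp [hj]
  have key : ∀ i a, lam * v (i, a) = (A₁ a 0 * v (i, 0) + A₁ a 1 * v (i, 1))
      + c * (A₂ a 0 * v (i - 1, 0) + A₂ a 1 * v (i - 1, 1)) := by
    intro i a
    have := congrFun hvm (i, a)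
    simp only [Matrix.mulVec, dotProduct, Fintype.sum_prod_type, Fin.sum_univ_two, hcA,
      Pi.smul_apply, smul_eq_mul, add_mul, ite_mul, zero_mul, Finset.sum_add_distrib,
      Finset.sum_ite_eq', Finset.sum_ite_eq, Finset.mem_univ, if_true] at this
    rw [← this]
    ring
  have kx : ∀ i, lam * v (i, 0) = - v (i, 1) + c * v (i - 1, 1) := by
    intro i
    have := key i 0
    simpa [hA₁, hA₂] using this
  have ky : ∀ i, lam * v (i, 1) = α₁ * v (i, 0) - α₂ * v (i, 1) + c * (α₃ * v (i - 1, 1)) := by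
    intro i
    have := key i 1
    simpa [hA₁, hA₂, sub_eq_add_neg] using this
  have kP : ∀ i, (lam ^ 2 + α₂ * lam + α₁) * v (i, 1)
      = c * ((α₁ + α₃ * lam) * v (i - 1, 1)) := by
    intro i
    linear_combination lam * ky i + α₁ * kx i
  have hy : ∃ i, v (i, 1) ≠ 0 := by
    by_contra hno
    push Not at hno
    apply hv0
    funext ⟨i, a⟩
    have hx : v (i, 0) = 0 := by
      have := kx i
      simpa [hno, hl0] using this
    fin_cases a
    · exact hx
    · exact hno i
  have hle : ∀ i, ‖lam ^ 2 + α₂ * lam + α₁‖ * ‖v (i, 1)‖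
      ≤ ‖α₁ + α₃ * lam‖ * ‖v (i - 1, 1)‖ := by
    intro i
    rw [← norm_mul, kP, norm_mul, norm_mul]
    exact mul_le_of_le_one_left (by positivity) hc
  have hsum := Finset.sum_le_sum (fun i (_ : i ∈ Finset.univ) => hle i)
  have hshift : ∑ i : ZMod n, ‖v (i - 1, 1)‖ = ∑ i : ZMod n, ‖v (i, 1)‖ :=
    (Equiv.subRight (1 : ZMod n)).sum_comp (fun i => ‖v (i, 1)‖)
  rw [← Finset.mul_sum, ← Finset.mul_sum, hshift] at hsum
  have hpos : 0 < ∑ i : ZMod n, ‖v (i, 1)‖ := by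
    obtain ⟨i, hi⟩ := hy
    exact Finset.sum_pos' (fun _ _ => norm_nonneg _) ⟨i, Finset.mem_univ _, norm_pos_iff.2 hi⟩
  have hPQ := le_of_mul_le_mul_right hsum hpos
  have hsq := pow_le_pow_left₀ (norm_nonneg _) hPQ 2
  rw [← Complex.normSq_eq_norm_sq, ← Complex.normSq_eq_norm_sq] at hsq
  have hn : 0 < lam.re ^ 2 + lam.im ^ 2 := by
    have := Complex.normSq_pos.2 hl0
    rw [Complex.normSq_apply] at this
    linarith
  have := aux_stab α₁ α₂ α₃ lam.re lam.im h₁ h₂₃ h₃ hstab hre hn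
  simp [Complex.normSq_apply, pow_two] at hsq
  linarith
end

section
/- Fix an integer n ≥ 1 and real numbers α₁ > 0 and α₃ > 0. Let B be the 2n×2n block-circulant complex matrix indexed by pairs (i, a) with i ∈ ℤ/nℤ and a ∈ {1,2}, whose (i, j)-th 2×2 block equals B₀ = [[0, −1], [α₁, −2α₃]] if j = i, equals B₋ = [[0, 1], [0, α₃]] if j = i − 1 (mod n), equals B₊ = [[0, 0], [−α₁, α₃]] if j = i + 1 (mod n), and is zero otherwise. Then every eigenvalue λ of B satisfies Re(λ) ≤ 0, and every nonzero eigenvalue λ of B satisfies Re(λ) < 0. -/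
lemma quad_aux (a p q : ℝ) (z : ℂ) (ha : 0 < a) (hp : 0 ≤ p) (hq : 0 ≤ q)
    (hpq : p = 0 → q = 0) (h : z ^ 2 * a + z * p + q = 0) :
    z.re ≤ 0 ∧ (z ≠ 0 → z.re < 0) := by
  have hre := congrArg Complex.re h
  have him := congrArg Complex.im h
  simp [pow_two] at hre him
  have key : z ≠ 0 → z.re < 0 := by
    intro hz
    by_contra hx
    push Not at hx
    by_cases hy : z.im = 0
    · have hx0 : z.re ≠ 0 := fun h0 => hz (Complex.ext h0 hy)
      have hx1 : 0 < z.re := lt_of_le_of_ne hx (Ne.symm hx0)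
      rw [hy] at hre
      have h1 : 0 < z.re * z.re * a := by positivity
      have h2 : 0 ≤ z.re * p := by positivity
      nlinarith
    · have h1 : 2 * z.re * a + p = 0 := by
        apply mul_left_cancel₀ hy
        linear_combination him
      have h2 : 0 ≤ z.re * a := by positivity
      have hp0 : p = 0 := by linarith
      have hx0 : z.re = 0 := by
        have : z.re * a = 0 := by linarith
        exact (mul_eq_zero.mp this).resolve_right ha.ne'
      rw [hx0, hp0, hpq hp0] at hre
      have h3 : 0 < z.im * z.im * a := by
        have := mul_self_pos.mpr hy
        positivity
      nlinarith
  refine ⟨?_, key⟩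
  by_cases hz : z = 0
  · simp [hz]
  · exact (key hz).le

lemma sum_aux (n : ℕ) [NeZero n] (hn : 3 ≤ n) (i : ZMod n) (f g h : ZMod n → ℂ) :
    (∑ j, if j = i then f j else if j = i - 1 then g j else if j = i + 1 then h j else 0)
      = f i + g (i - 1) + h (i + 1) := by
  haveI : Fact (1 < n) := ⟨by omega⟩
  have e1 : i - 1 ≠ i := by simp
  have e2 : i + 1 ≠ i := by simp
  have e3 : i + 1 ≠ i - 1 := by
    intro e
    have h2 : ((2 : ℕ) : ZMod n) = 0 := by push_cast; linear_combination e
    rw [ZMod.natCast_eq_zero_iff] at h2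
    have := Nat.le_of_dvd (by norm_num) h2
    omega
  have : ∀ j, (if j = i then f j else if j = i - 1 then g j else if j = i + 1 then h j else 0)
      = (if j = i then f j else 0) + (if j = i - 1 then g j else 0)
        + (if j = i + 1 then h j else 0) := by
    intro j
    by_cases a1 : j = i
    · subst a1; simp [e1.symm, e2.symm]
    by_cases a2 : j = i - 1
    · subst a2; simp [e1, e3.symm]
    simp [a1, a2]
  simp [this, Finset.sum_add_distrib]

/-- Network-lifetime half of Proposition 2: the block-circulant system matrix of the
bilateral maneuver control has all eigenvalues with nonpositive real part, and all of
its nonzero eigenvalues have negative real part, for any `α₁ > 0`, `α₃ > 0` and any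
ring size `n`. -/
theorem stmt_17 (n : ℕ) [NeZero n] (α₁ α₃ : ℝ) (h₁ : 0 < α₁) (h₃ : 0 < α₃)
    (B₀ Bm Bp : Matrix (Fin 2) (Fin 2) ℂ)
    (hB₀ : B₀ = !![0, -1; (α₁ : ℂ), -(2 * α₃ : ℂ)])
    (hBm : Bm = !![0, 1; 0, (α₃ : ℂ)])
    (hBp : Bp = !![0, 0; -(α₁ : ℂ), (α₃ : ℂ)])
    (B : Matrix (ZMod n × Fin 2) (ZMod n × Fin 2) ℂ)
    (hB : ∀ (i j : ZMod n) (a b : Fin 2),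
      B (i, a) (j, b) =
        if j = i then B₀ a b
        else if j = i - 1 then Bm a b
        else if j = i + 1 then Bp a b
        else 0) :
    ∀ lam ∈ spectrum ℂ B, lam.re ≤ 0 ∧ (lam ≠ 0 → lam.re < 0) := by
  intro lam hlam
  obtain ⟨v, hv0, hv⟩ : ∃ v, v ≠ 0 ∧ B.mulVec v = lam • v := by
    rw [← Matrix.spectrum_toLin', ← Module.End.hasEigenvalue_iff_mem_spectrum] at hlam
    obtain ⟨v, hv⟩ := hlam.exists_hasEigenvector
    exact ⟨v, hv.2, by simpa using hv.apply_eq_smul⟩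
  by_cases hl0 : lam = 0
  · simp [hl0]
  obtain ⟨t, ht⟩ : ∃ t : ZMod n → ℂ, ∀ i, t i = v (i, 0) := ⟨_, fun _ => rfl⟩
  obtain ⟨w, hw⟩ : ∃ w : ZMod n → ℂ, ∀ i, w i = v (i, 1) := ⟨_, fun _ => rfl⟩
  have E : ∀ i a, ∑ j, (if j = i then B₀ a 0 * t j + B₀ a 1 * w j
        else if j = i - 1 then Bm a 0 * t j + Bm a 1 * w j
        else if j = i + 1 then Bp a 0 * t j + Bp a 1 * w j
        else 0) = lam * v (i, a) := by
    intro i a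
    have := congrFun hv (i, a)
    rw [Matrix.mulVec, dotProduct, Fintype.sum_prod_type] at this
    simp only [Fin.sum_univ_two, hB, Pi.smul_apply, smul_eq_mul] at this
    rw [← this]
    refine Finset.sum_congr rfl fun j _ => ?_
    rw [ht, hw]
    split_ifs <;> simp
  obtain ⟨N, hN⟩ : ∃ N : ℝ, N = ∑ i, Complex.normSq (w i) := ⟨_, rfl⟩
  obtain ⟨C, hC⟩ : ∃ C : ℂ, C = ∑ i, starRingEnd ℂ (w i) * w (i - 1) := ⟨_, rfl⟩
  have hNC : (N : ℂ) = ∑ i, starRingEnd ℂ (w i) * w i := by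
    rw [hN]; push_cast
    exact Finset.sum_congr rfl fun i _ => Complex.normSq_eq_conj_mul_self
  have hC' : starRingEnd ℂ C = ∑ i, starRingEnd ℂ (w i) * w (i + 1) := by
    rw [hC, map_sum, ← Equiv.sum_comp (Equiv.addRight (1 : ZMod n))]
    refine Finset.sum_congr rfl fun i _ => ?_
    simp [mul_comm]
  have hNpos : (∀ i, lam * t i = 0 ∨ w ≠ 0) → 0 < N := by
    intro h
    have hw0 : w ≠ 0 := by
      intro hw0
      apply hv0
      ext ⟨i, a⟩
      fin_cases a
      · have := (h i).resolve_right (by simp [hw0])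
        simpa [hl0, ht] using this
      · have := congrFun hw0 i
        simpa [hw] using this
    obtain ⟨i, hi⟩ := Function.ne_iff.mp hw0
    rw [hN]
    exact Finset.sum_pos' (fun i _ => Complex.normSq_nonneg _)
      ⟨i, Finset.mem_univ _, Complex.normSq_pos.mpr hi⟩
  have hCN : C.re ≤ N := by
    have h0 : 0 ≤ ∑ i, Complex.normSq (w i - w (i - 1)) :=
      Finset.sum_nonneg fun i _ => Complex.normSq_nonneg _
    have h1 : ∑ i, Complex.normSq (w (i - 1)) = N := by
      rw [hN]
      exact Equiv.sum_comp (Equiv.subRight (1 : ZMod n)) (fun i => Complex.normSq (w i))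
    have h2 : ∑ i, Complex.normSq (w i - w (i - 1)) = N + N - 2 * C.re := by
      rw [hC, Complex.re_sum, Finset.mul_sum]
      nth_rewrite 2 [← h1]
      rw [hN, ← Finset.sum_add_distrib, ← Finset.sum_sub_distrib]
      refine Finset.sum_congr rfl fun i _ => ?_
      simp [Complex.normSq_apply]
      ring
    linarith
  have h0n : n ≠ 0 := NeZero.ne n
  have cases : n = 1 ∨ n = 2 ∨ 3 ≤ n := by omega
  rcases cases with hn | hn | hn
  · subst hn
    have E0 : ∀ i, lam * t i = - w i := by
      intro i
      have := E i 0
      rw [← ht] at this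
      rw [← this]
      simp [Subsingleton.elim _ i, hB₀]
    have E1 : ∀ i, lam * w i = α₁ * t i - 2 * α₃ * w i := by
      intro i
      have := E i 1
      rw [← hw] at this
      rw [← this]
      simp [Subsingleton.elim _ i, hB₀]
      ring
    have hp := hNpos (fun i => by
      by_cases h : w = 0
      · left; rw [E0, h]; simp
      · exact Or.inr h)
    refine quad_aux N (2 * α₃ * N) (α₁ * N) lam hp (by positivity) (by positivity)
      (fun h => absurd h (by positivity)) ?_
    push_cast
    rw [hNC]
    simp only [Finset.mul_sum, ← Finset.sum_add_distrib]
    refine Finset.sum_eq_zero fun i _ => ?_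
    linear_combination (starRingEnd ℂ (w i)) * lam * E1 i + (starRingEnd ℂ (w i)) * α₁ * E0 i
  · subst hn
    have hs : ∀ i : ZMod 2, ∀ f g h : ZMod 2 → ℂ, (∑ j, if j = i then f j
        else if j = i - 1 then g j else if j = i + 1 then h j else 0) = f i + g (i - 1) := by
      intro i f g h
      have e1 : i - 1 ≠ i := by simp
      have : ∀ j, (if j = i then f j else if j = i - 1 then g j
          else if j = i + 1 then h j else 0)
          = (if j = i then f j else 0) + (if j = i - 1 then g j else 0) := by
        intro j
        by_cases a1 : j = i
        · subst a1; simp [e1.symm]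
        have a2 : j = i - 1 := by revert i j; decide
        subst a2; simp
      simp [this, Finset.sum_add_distrib]
    have E0 : ∀ i, lam * t i = w (i - 1) - w i := by
      intro i
      have := E i 0
      rw [← ht, hs] at this
      rw [← this]
      simp [hB₀, hBm]
      ring
    have E1 : ∀ i, lam * w i = α₁ * t i + α₃ * (w (i - 1) - 2 * w i) := by
      intro i
      have := E i 1
      rw [← hw, hs] at this
      rw [← this]
      simp [hB₀, hBm]
      ring
    have hp := hNpos (fun i => by
      by_cases h : w = 0
      · left; rw [E0, h]; simp
      · exact Or.inr h)
    have hCr : (C.re : ℂ) = C := by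
      rw [← Complex.conj_eq_iff_re, hC', hC]
      refine Finset.sum_congr rfl fun i _ => ?_
      have : ∀ k : ZMod 2, k + 1 = k - 1 := by decide
      rw [this]
    have hD : 0 ≤ N - C.re := by linarith
    have hD2 : 0 < 2 * N - C.re := by linarith
    refine quad_aux N (α₃ * (2 * N - C.re)) (α₁ * (N - C.re)) lam hp (by positivity)
      (by positivity) (fun h => absurd h (by positivity)) ?_
    push_cast
    rw [hCr, hNC, hC]
    simp only [Finset.mul_sum, ← Finset.sum_sub_distrib, ← Finset.sum_add_distrib]
    refine Finset.sum_eq_zero fun i _ => ?_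
    linear_combination (starRingEnd ℂ (w i)) * lam * E1 i + (starRingEnd ℂ (w i)) * α₁ * E0 i
  · have E0 : ∀ i, lam * t i = w (i - 1) - w i := by
      intro i
      have := E i 0
      rw [← ht, sum_aux n hn] at this
      rw [← this]
      simp [hB₀, hBm, hBp]
      ring
    have E1 : ∀ i, lam * w i = α₁ * (t i - t (i + 1))
        + α₃ * (w (i - 1) - 2 * w i + w (i + 1)) := by
      intro i
      have := E i 1
      rw [← hw, sum_aux n hn] at this
      rw [← this]
      simp [hB₀, hBm, hBp]
      ring
    have hp := hNpos (fun i => by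
      by_cases h : w = 0
      · left; rw [E0, h]; simp
      · exact Or.inr h)
    have hCr : ((2 * C.re : ℝ) : ℂ) = C + starRingEnd ℂ C := by
      rw [Complex.add_conj]
    have hD : 0 ≤ 2 * N - 2 * C.re := by linarith
    refine quad_aux N (α₃ * (2 * N - 2 * C.re)) (α₁ * (2 * N - 2 * C.re)) lam hp
      (by positivity) (by positivity)
      (fun h => by rw [(mul_eq_zero.mp h).resolve_left h₃.ne', mul_zero]) ?_
    rw [Complex.ofReal_mul, Complex.ofReal_mul, Complex.ofReal_sub, hCr, Complex.ofReal_mul,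
      hC', hNC, hC]
    simp only [Finset.mul_sum, ← Finset.sum_sub_distrib, ← Finset.sum_add_distrib]
    refine Finset.sum_eq_zero fun i _ => ?_
    have E2 := E0 (i + 1)
    rw [add_sub_cancel_right] at E2
    push_cast
    linear_combination (starRingEnd ℂ (w i)) * lam * E1 i
      + (starRingEnd ℂ (w i)) * α₁ * (E0 i - E2)
end
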